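/- arXiv:2007.03144 — 4 statements merged into one kernel-verified Lean document; each statement's English description precedes it below -/
import Mathlib

section
/- Let B and W be complex Banach spaces, T : B → B a continuous linear map with ‖T b‖ = ‖b‖ for all b ∈ B, and T_W : W → W a continuous linear map. Let V be a finite-dimensional complex normed vector space and L a linear automorphism of V such that there exist C > 0 and ρ > 1 with ‖L⁻ᵏ v‖ ≤ C ρ⁻ᵏ ‖v‖ for every k ∈ ℕ and v ∈ V. Let u : V → B, α : V → W and d : B → W be continuous linear maps satisfying T_W ∘ d = d ∘ T and T_W(α(v)) = α(L v) + d(u(v)) for all v ∈ V. Then for every v ∈ V the limit 𝔅(v) := lim_{n→∞} T_Wⁿ(α(L⁻ⁿ v)) exists in W and equals α(v) + d(U(v)), where U(v) = ∑_{k=0}^{∞} Tᵏ(u(L⁻⁽ᵏ⁺¹⁾ v)). -/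
/-!
Applying `T_Wⁿ` to the relation `T_W(α w) = α(L w) + d(u w)` at `w = L⁻⁽ⁿ⁺¹⁾ v`, and moving `T_Wⁿ`
past `d`, shows that consecutive terms of the sequence `T_Wⁿ(α(L⁻ⁿ v))` differ by
`d(Tⁿ(u(L⁻⁽ⁿ⁺¹⁾ v)))`. The sequence therefore equals `α v` plus `d` of the partial sums of the
series for `U(v)`. As `T` is isometric and `L⁻¹` has exponentially decaying iterates, the terms of
this series are dominated by a geometric one, so it converges and the continuity of `d` gives the
limit.
-/


/-- In the abstract setting of Lemma 2.1 of the paper, for every `v ∈ V` the limit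
`𝔅(v) = lim_n T_Wⁿ(α(L⁻ⁿ v))` exists in `W` and equals `α(v) + d(U(v))` where
`U(v) = ∑_{k} Tᵏ(u(L⁻⁽ᵏ⁺¹⁾ v))`. -/
theorem stmt_1
    {B W : Type*} [NormedAddCommGroup B] [NormedSpace ℂ B] [CompleteSpace B]
    [NormedAddCommGroup W] [NormedSpace ℂ W] [CompleteSpace W]
    (T : B →L[ℂ] B) (hT : ∀ b : B, ‖T b‖ = ‖b‖)
    (T_W : W →L[ℂ] W)
    {V : Type*} [NormedAddCommGroup V] [NormedSpace ℂ V] [FiniteDimensional ℂ V]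
    (L Linv : V →L[ℂ] V)
    (hinv₁ : L.comp Linv = ContinuousLinearMap.id ℂ V)
    (hinv₂ : Linv.comp L = ContinuousLinearMap.id ℂ V)
    (C ρ : ℝ) (hC : 0 < C) (hρ : 1 < ρ)
    (hdecay : ∀ (k : ℕ) (v : V), ‖(Linv ^ k) v‖ ≤ C * ρ⁻¹ ^ k * ‖v‖)
    (u : V →L[ℂ] B) (α : V →L[ℂ] W) (d : B →L[ℂ] W)
    (hd : T_W.comp d = d.comp T)
    (hα : ∀ v : V, T_W (α v) = α (L v) + d (u v)) :
    ∀ v : V, Filter.Tendsto (fun n : ℕ => (T_W ^ n) (α ((Linv ^ n) v))) Filter.atTop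
      (nhds (α v + d (∑' k : ℕ, (T ^ k) (u ((Linv ^ (k + 1)) v))))) := by
  intro v
  have hTn : ∀ (n : ℕ) (b : B), ‖(T ^ n) b‖ = ‖b‖ := by
    intro n
    induction n with
    | zero => simp
    | succ n ih => intro b; rw [pow_succ, mul_apply_eq_comp, ih, hT]
  have hdn : ∀ (n : ℕ) (b : B), (T_W ^ n) (d b) = d ((T ^ n) b) := by
    intro n
    induction n with
    | zero => simp
    | succ n ih =>
      intro b
      have h : T_W (d b) = d (T b) := DFunLike.congr_fun hd b
      rw [pow_succ, pow_succ, mul_apply_eq_comp, mul_apply_eq_comp, h, ih]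
  have hpartial : ∀ n : ℕ, (T_W ^ n) (α ((Linv ^ n) v)) =
      α v + d (∑ k ∈ Finset.range n, (T ^ k) (u ((Linv ^ (k + 1)) v))) := by
    intro n
    induction n with
    | zero => simp
    | succ n ih =>
      have hL : L ((Linv ^ (n + 1)) v) = (Linv ^ n) v := by
        rw [pow_succ', mul_apply_eq_comp]
        exact DFunLike.congr_fun hinv₁ _
      rw [pow_succ T_W, mul_apply_eq_comp, hα, hL, map_add, ih, hdn,
        Finset.sum_range_succ, map_add, add_assoc]
  have hρ0 : 0 ≤ ρ⁻¹ := by positivity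
  have hsum : Summable fun k : ℕ => (T ^ k) (u ((Linv ^ (k + 1)) v)) := by
    have hgeom : Summable fun k : ℕ => ‖u‖ * (C * ρ⁻¹ ^ (k + 1) * ‖v‖) :=
      ((((summable_nat_add_iff 1).mpr (summable_geometric_of_lt_one hρ0
        (inv_lt_one_of_one_lt₀ hρ))).mul_left C).mul_right ‖v‖).mul_left ‖u‖
    refine Summable.of_norm_bounded hgeom fun k => ?_
    rw [hTn]
    exact (u.le_opNorm _).trans (mul_le_mul_of_nonneg_left (hdecay _ _) (norm_nonneg _))
  simp only [hpartial]
  exact ((d.continuous.tendsto _).comp hsum.hasSum.tendsto_sum_nat).const_add (α v)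
end

section
/- Let B and W be complex Banach spaces, T : B → B a continuous linear map with ‖T b‖ = ‖b‖ for all b ∈ B, and T_W : W → W a continuous linear map. Let V be a finite-dimensional complex normed vector space and L a linear automorphism of V such that there exist C > 0 and ρ > 1 with ‖L⁻ᵏ v‖ ≤ C ρ⁻ᵏ ‖v‖ for every k ∈ ℕ and v ∈ V. Let u : V → B, α : V → W and d : B → W be continuous linear maps satisfying T_W ∘ d = d ∘ T and T_W(α(v)) = α(L v) + d(u(v)) for all v ∈ V. Define 𝔅(v) := lim_{n→∞} T_Wⁿ(α(L⁻ⁿ v)) (which exists for every v). Then the intertwining identity T_W(𝔅(v)) = 𝔅(L v) holds for all v ∈ V. -/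
/-- In the abstract setting of Lemma 2.1 of the paper, the map
`𝔅(v) = lim_n T_Wⁿ(α(L⁻ⁿ v))` (which exists for every `v`) satisfies the intertwining identity
`T_W (𝔅 v) = 𝔅 (L v)` for all `v ∈ V`. -/
theorem stmt_2
    {B W : Type*} [NormedAddCommGroup B] [NormedSpace ℂ B] [CompleteSpace B]
    [NormedAddCommGroup W] [NormedSpace ℂ W] [CompleteSpace W]
    (T : B →L[ℂ] B) (hT : ∀ b : B, ‖T b‖ = ‖b‖)
    (T_W : W →L[ℂ] W)
    {V : Type*} [NormedAddCommGroup V] [NormedSpace ℂ V] [FiniteDimensional ℂ V]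
    (L Linv : V →L[ℂ] V)
    (hinv₁ : L.comp Linv = ContinuousLinearMap.id ℂ V)
    (hinv₂ : Linv.comp L = ContinuousLinearMap.id ℂ V)
    (C ρ : ℝ) (hC : 0 < C) (hρ : 1 < ρ)
    (hdecay : ∀ (k : ℕ) (v : V), ‖(Linv ^ k) v‖ ≤ C * ρ⁻¹ ^ k * ‖v‖)
    (u : V →L[ℂ] B) (α : V →L[ℂ] W) (d : B →L[ℂ] W)
    (hd : T_W.comp d = d.comp T)
    (hα : ∀ v : V, T_W (α v) = α (L v) + d (u v))
    (𝔅 : V → W)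
    (h𝔅 : ∀ v : V, Filter.Tendsto (fun n : ℕ => (T_W ^ n) (α ((Linv ^ n) v))) Filter.atTop
      (nhds (𝔅 v))) :
    ∀ v : V, T_W (𝔅 v) = 𝔅 (L v) := by
  intro v
  -- Applying `T_W` to the `n`-th term for `v` gives the `(n + 1)`-st term for `L v`,
  -- since `L⁻ⁿ v = L⁻⁽ⁿ⁺¹⁾ (L v)`; the identity follows by uniqueness of limits.
  have hstep : ∀ n : ℕ, T_W ((T_W ^ n) (α ((Linv ^ n) v))) =
      (T_W ^ (n + 1)) (α ((Linv ^ (n + 1)) (L v))) := by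
    intro n
    have hv : Linv (L v) = v := DFunLike.congr_fun hinv₂ v
    rw [pow_succ' T_W, pow_succ Linv, ContinuousLinearMap.mul_apply,
      ContinuousLinearMap.mul_apply, hv]
  have hleft := (T_W.continuous.tendsto (𝔅 v)).comp (h𝔅 v)
  have hright := (h𝔅 (L v)).comp (Filter.tendsto_add_atTop_nat 1)
  exact tendsto_nhds_unique hleft (hright.congr fun n => (hstep n).symm)
end

section
/- Let W and Z be complex Banach spaces, T_W : W → W a continuous linear map, T_Z : Z → Z a continuous linear map with ‖T_Z z‖ = ‖z‖ for all z, and d : Z → W a continuous linear map with T_W ∘ d = d ∘ T_Z. Let V⁺, V⁻, V⁰ be finite-dimensional complex normed vector spaces, let B⁺ : V⁺ → W, B⁻ : V⁻ → W, B⁰ : V⁰ → W and F : V⁰ → Z be continuous linear maps, and let L⁺ : V⁺ → V⁺, L⁻ : V⁻ → V⁻, L⁰ : V⁰ → V⁰ be linear maps such that: T_W ∘ B⁺ = B⁺ ∘ L⁺; T_W ∘ B⁻ = B⁻ ∘ L⁻ with sup_{n∈ℕ} ‖(L⁻)ⁿ‖ < ∞; and T_W ∘ B⁰ = B⁰ ∘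 L⁰ + d ∘ F with (L⁰ − id)^J = 0 for some integer J ≥atorio 1. Then there exists a constant C > 0 such that for all v⁺ ∈ V⁺, v⁻ ∈ V⁻, v⁰ ∈ V⁰, U₀ ∈ Z and all integers n ≥ 1, setting γ := B⁺(v⁺) + B⁻(v⁻) + B⁰(v⁰) + d(U₀), one has ‖T_Wⁿ(γ) − B⁺((L⁺)ⁿ v⁺)‖ ≤ C (‖v⁻‖ + ‖v⁰‖ + ‖U₀‖) n^J. -/
/-!
By linearity the `Bp` terms cancel and the other three are estimated separately. The contracting
part stays bounded by `hLm`, and `T_W ^ n (d U₀) = d (T_Z ^ n U₀)` stays bounded because `T_Z` is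
isometric. For the neutral part, iterating `T_W ∘ B0 = B0 ∘ L0 + d ∘ F` gives
`T_W ^ n (B0 v) = B0 (L0 ^ n v) + d z`, where `z` is a sum of isometric images of `F (L0 ^ k v)`,
`k < n` (`twisted_iterate`). Unipotence makes `L0 ^ k v` grow at most like `(k + 1) ^ (J - 1)`
(`unipotent_growth`), so summing over `k < n` costs exactly one more power of `n`.
-/

/-- Polynomial growth of unipotent iterates. The induction on `j` rests on the telescoping identity
`L ^ n v - v = ∑ k < n, L ^ k ((L - 1) v)`, which lowers the nilpotency index by one. -/
lemma unipotent_growth {V : Type*} [NormedAddCommGroup V] [NormedSpace ℂ V]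
    [FiniteDimensional ℂ V] (L : Module.End ℂ V) (j : ℕ) :
    ∃ K : ℝ, 0 ≤ K ∧ ∀ v : V, ((L - 1) ^ (j + 1)) v = 0 →
      ∀ n : ℕ, ‖(L ^ n) v‖ ≤ K * ((n : ℝ) + 1) ^ j * ‖v‖ := by
  induction j with
  | zero =>
    refine ⟨1, zero_le_one, fun v hv n => ?_⟩
    have hLv : L v = v := by simpa [sub_eq_zero] using hv
    have hn : (L ^ n) v = v := by
      induction n with
      | zero => simp
      | succ n ih => rw [pow_succ, Module.End.mul_apply, hLv, ih]
    simp [hn]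
  | succ j ih =>
    obtain ⟨K, hK, h⟩ := ih
    -- `N` is `L - 1` as a continuous map, which gives access to its operator norm.
    let N : V →L[ℂ] V := LinearMap.toContinuousLinearMap (L - 1)
    refine ⟨1 + K * ‖N‖, by positivity, fun v hv n => ?_⟩
    have hw : ((L - 1) ^ (j + 1)) ((L - 1) v) = 0 := by
      rw [← Module.End.mul_apply, ← pow_succ]; exact hv
    have hN : ‖(L - 1) v‖ ≤ ‖N‖ * ‖v‖ := N.le_opNorm v
    have hstep : ∀ m : ℕ, m ≤ n →
        ‖(L ^ m) v‖ ≤ ‖v‖ + m * (K * ((n : ℝ) + 1) ^ j * (‖N‖ * ‖v‖)) := by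
      intro m
      induction m with
      | zero => intro _; simp
      | succ m ihm =>
        intro hm
        have e : (L ^ (m + 1)) v = (L ^ m) v + (L ^ m) ((L - 1) v) := by
          rw [pow_succ, Module.End.mul_apply, ← map_add]
          simp
        have hmn : (m : ℝ) ≤ n := by exact_mod_cast (Nat.le_of_succ_le hm)
        have h2 : ‖(L ^ m) ((L - 1) v)‖ ≤ K * ((n : ℝ) + 1) ^ j * (‖N‖ * ‖v‖) :=
          (h _ hw m).trans (by gcongr)
        have h1 := ihm (Nat.le_of_succ_le hm)
        rw [e]
        push_cast
        linarith [norm_add_le ((L ^ m) v) ((L ^ m) ((L - 1) v))]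
    have hp : (1 : ℝ) ≤ ((n : ℝ) + 1) ^ (j + 1) := one_le_pow₀ (by simp)
    calc ‖(L ^ n) v‖ ≤ 1 * ‖v‖ + n * (K * ((n : ℝ) + 1) ^ j * (‖N‖ * ‖v‖)) := by
          simpa using hstep n le_rfl
      _ ≤ ((n : ℝ) + 1) ^ (j + 1) * ‖v‖
          + ((n : ℝ) + 1) * (K * ((n : ℝ) + 1) ^ j * (‖N‖ * ‖v‖)) := by
          gcongr; linarith
      _ = (1 + K * ‖N‖) * ((n : ℝ) + 1) ^ (j + 1) * ‖v‖ := by ring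

/-- Iterating the twisted intertwining relation `T ∘ B = B ∘ L + d ∘ F`: the accumulated error is
the image under `d` of an element whose norm is controlled by the orbit of `v`. -/
lemma twisted_iterate {W Z V : Type*} [NormedAddCommGroup W] [NormedSpace ℂ W]
    [NormedAddCommGroup Z] [NormedSpace ℂ Z] [NormedAddCommGroup V] [NormedSpace ℂ V]
    (T : W →L[ℂ] W) (S : Z →L[ℂ] Z) (hS : ∀ z : Z, ‖S z‖ = ‖z‖)
    (d : Z →L[ℂ] W) (hd : ∀ z, T (d z) = d (S z)) (B : V →L[ℂ] W) (F : V →L[ℂ] Z)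
    (L : Module.End ℂ V) (hB : ∀ v : V, T (B v) = B (L v) + d (F v)) (v : V) (n : ℕ) :
    ∃ z : Z, (T ^ n) (B v) = B ((L ^ n) v) + d z ∧
      ‖z‖ ≤ ∑ k ∈ Finset.range n, ‖F‖ * ‖(L ^ k) v‖ := by
  induction n with
  | zero => exact ⟨0, by simp, by simp⟩
  | succ n ih =>
    obtain ⟨z, hz, hzn⟩ := ih
    refine ⟨F ((L ^ n) v) + S z, ?_, ?_⟩
    · rw [pow_succ', pow_succ', ContinuousLinearMap.mul_def, ContinuousLinearMap.comp_apply,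
        hz, map_add, hB, hd, Module.End.mul_apply, map_add, add_assoc]
    · rw [Finset.sum_range_succ]
      have := norm_add_le (F ((L ^ n) v)) (S z)
      have := F.le_opNorm ((L ^ n) v)
      have := hS z
      linarith

/-- Iterating an exact intertwining relation `T ∘ B = B ∘ L`. -/
lemma intertwined_iterate {W V : Type*} [NormedAddCommGroup W] [NormedSpace ℂ W]
    [NormedAddCommGroup V] [NormedSpace ℂ V] (T : W →L[ℂ] W) (B : V →L[ℂ] W)
    (L : Module.End ℂ V) (hB : ∀ v : V, T (B v) = B (L v)) (v : V) (n : ℕ) :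
    (T ^ n) (B v) = B ((L ^ n) v) := by
  induction n with
  | zero => simp
  | succ n ih =>
    rw [pow_succ', pow_succ', ContinuousLinearMap.mul_def, ContinuousLinearMap.comp_apply,
      ih, hB, Module.End.mul_apply]

/-- Abstract form of Lemma 2.2 of the paper (growth of closed currents).
With `T_W` acting on the Banach space `W` of currents, `T_Z` an isometry of `Z`,
`d : Z → W` intertwining (`T_W ∘ d = d ∘ T_Z`), representation maps `B⁺, B⁻, B⁰` of the
expanding, contracting and neutral finite-dimensional subspaces with respective actions
`L⁺, L⁻, L⁰` (`L⁻` with bounded iterates, `L⁰` unipotent of index `≤ J`), one has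
`‖T_Wⁿ(γ) - B⁺((L⁺)ⁿ v⁺)‖ ≤ C (‖v⁻‖ + ‖v⁰‖ + ‖U₀‖) n^J` for
`γ = B⁺ v⁺ + B⁻ v⁻ + B⁰ v⁰ + d U₀` and all `n ≥ 1`. -/
theorem stmt_7
    {W Z : Type*} [NormedAddCommGroup W] [NormedSpace ℂ W] [CompleteSpace W]
    [NormedAddCommGroup Z] [NormedSpace ℂ Z] [CompleteSpace Z]
    (T_W : W →L[ℂ] W) (T_Z : Z →L[ℂ] Z) (hTZ : ∀ z : Z, ‖T_Z z‖ = ‖z‖)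
    (d : Z →L[ℂ] W) (hd : T_W.comp d = d.comp T_Z)
    {Vp Vm V0 : Type*}
    [NormedAddCommGroup Vp] [NormedSpace ℂ Vp] [FiniteDimensional ℂ Vp]
    [NormedAddCommGroup Vm] [NormedSpace ℂ Vm] [FiniteDimensional ℂ Vm]
    [NormedAddCommGroup V0] [NormedSpace ℂ V0] [FiniteDimensional ℂ V0]
    (Bp : Vp →L[ℂ] W) (Bm : Vm →L[ℂ] W) (B0 : V0 →L[ℂ] W) (F : V0 →L[ℂ] Z)
    (Lp : Vp →ₗ[ℂ] Vp) (Lm : Vm →ₗ[ℂ] Vm) (L0 : V0 →ₗ[ℂ] V0)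
    (hBp : ∀ v : Vp, T_W (Bp v) = Bp (Lp v))
    (hBm : ∀ v : Vm, T_W (Bm v) = Bm (Lm v))
    (hLm : ∃ M : ℝ, ∀ (n : ℕ) (v : Vm), ‖(Lm ^ n) v‖ ≤ M * ‖v‖)
    (hB0 : ∀ v : V0, T_W (B0 v) = B0 (L0 v) + d (F v))
    (J : ℕ) (hJ : 1 ≤ J)
    (hL0 : ((L0 : Module.End ℂ V0) - 1) ^ J = 0) :
    ∃ C : ℝ, 0 < C ∧ ∀ (vp : Vp) (vm : Vm) (v0 : V0) (U0 : Z) (n : ℕ), 1 ≤ n →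
      ‖(T_W ^ n) (Bp vp + Bm vm + B0 v0 + d U0) - Bp ((Lp ^ n) vp)‖ ≤
        C * (‖vm‖ + ‖v0‖ + ‖U0‖) * (n : ℝ) ^ J := by
  have hd' : ∀ z, T_W (d z) = d (T_Z z) := fun z => congrArg (fun f => f z) hd
  obtain ⟨M, hM⟩ := hLm
  obtain ⟨j, rfl⟩ : ∃ j, J = j + 1 := ⟨J - 1, by omega⟩
  obtain ⟨K, hK, hgrow⟩ := unipotent_growth L0 j
  have hgrow' : ∀ (v : V0) (n : ℕ), ‖(L0 ^ n) v‖ ≤ K * ((n : ℝ) + 1) ^ j * ‖v‖ :=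
    fun v => hgrow v (by simp [hL0])
  -- `a`, `b`, `c` are the constants for the contracting, neutral and exact parts; `|M|` is used
  -- since `M` may be negative when `Vm` is trivial, and `2 ^ j` comes from `n + 1 ≤ 2 * n`.
  let a := ‖Bm‖ * |M|
  let b := ‖B0‖ * (K * 2 ^ j) + ‖d‖ * (‖F‖ * K)
  let c := ‖d‖
  have ha : 0 ≤ a := by positivity
  have hb : 0 ≤ b := by positivity
  have hc : 0 ≤ c := norm_nonneg d
  refine ⟨a + b + c + 1, by positivity, fun vp vm v0 U0 n hn => ?_⟩
  have hn' : (1 : ℝ) ≤ n := by exact_mod_cast hn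
  have hpow : (1 : ℝ) ≤ (n : ℝ) ^ (j + 1) := one_le_pow₀ hn'
  have hm : ‖(T_W ^ n) (Bm vm)‖ ≤ a * ‖vm‖ * (n : ℝ) ^ (j + 1) := by
    rw [intertwined_iterate T_W Bm Lm hBm]
    calc ‖Bm ((Lm ^ n) vm)‖ ≤ ‖Bm‖ * ‖(Lm ^ n) vm‖ := Bm.le_opNorm _
      _ ≤ ‖Bm‖ * (|M| * ‖vm‖) := by
          gcongr
          exact (hM n vm).trans (by gcongr; exact le_abs_self M)
      _ = a * ‖vm‖ * 1 := by simp only [a]; ring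
      _ ≤ a * ‖vm‖ * (n : ℝ) ^ (j + 1) := by gcongr
  have hU : ‖(T_W ^ n) (d U0)‖ ≤ c * ‖U0‖ * (n : ℝ) ^ (j + 1) := by
    have hiso : ‖((T_Z : Module.End ℂ Z) ^ n) U0‖ = ‖U0‖ := by
      clear * - hTZ
      induction n with
      | zero => simp
      | succ n ih => rw [pow_succ', Module.End.mul_apply]; exact (hTZ _).trans ih
    rw [intertwined_iterate T_W d (T_Z : Module.End ℂ Z) hd']
    calc ‖d (((T_Z : Module.End ℂ Z) ^ n) U0)‖ ≤ c * ‖U0‖ * 1 := by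
          rw [mul_one, ← hiso]; exact d.le_opNorm _
      _ ≤ c * ‖U0‖ * (n : ℝ) ^ (j + 1) := by gcongr
  have h0 : ‖(T_W ^ n) (B0 v0)‖ ≤ b * ‖v0‖ * (n : ℝ) ^ (j + 1) := by
    obtain ⟨z, hz, hzn⟩ := twisted_iterate T_W T_Z hTZ d hd' B0 F L0 hB0 v0 n
    have hz' : ‖z‖ ≤ ‖F‖ * K * ‖v0‖ * (n : ℝ) ^ (j + 1) := by
      calc ‖z‖ ≤ ∑ k ∈ Finset.range n, ‖F‖ * ‖(L0 ^ k) v0‖ := hzn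
        _ ≤ ∑ k ∈ Finset.range n, ‖F‖ * (K * (n : ℝ) ^ j * ‖v0‖) := by
            refine Finset.sum_le_sum fun k hk => ?_
            have hkn : (k : ℝ) + 1 ≤ n := by exact_mod_cast Finset.mem_range.1 hk
            gcongr
            exact (hgrow' v0 k).trans (by gcongr)
        _ = ‖F‖ * K * ‖v0‖ * (n : ℝ) ^ (j + 1) := by
            rw [Finset.sum_const, Finset.card_range, nsmul_eq_mul]; ring
    have hL : ‖(L0 ^ n) v0‖ ≤ K * 2 ^ j * ‖v0‖ * (n : ℝ) ^ (j + 1) := by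
      calc ‖(L0 ^ n) v0‖ ≤ K * ((n : ℝ) + 1) ^ j * ‖v0‖ := hgrow' v0 n
        _ ≤ K * (2 * (n : ℝ)) ^ j * ‖v0‖ := by gcongr; linarith
        _ = K * 2 ^ j * ‖v0‖ * (n : ℝ) ^ j := by rw [mul_pow]; ring
        _ ≤ K * 2 ^ j * ‖v0‖ * (n : ℝ) ^ (j + 1) := by
            gcongr
            omega
    rw [hz]
    calc ‖B0 ((L0 ^ n) v0) + d z‖ ≤ ‖B0‖ * ‖(L0 ^ n) v0‖ + ‖d‖ * ‖z‖ :=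
          norm_add_le_of_le (B0.le_opNorm _) (d.le_opNorm _)
      _ ≤ ‖B0‖ * (K * 2 ^ j * ‖v0‖ * (n : ℝ) ^ (j + 1))
          + ‖d‖ * (‖F‖ * K * ‖v0‖ * (n : ℝ) ^ (j + 1)) := by gcongr
      _ = b * ‖v0‖ * (n : ℝ) ^ (j + 1) := by simp only [b]; ring
  have hsplit : (T_W ^ n) (Bp vp + Bm vm + B0 v0 + d U0) - Bp ((Lp ^ n) vp)
      = (T_W ^ n) (Bm vm) + (T_W ^ n) (B0 v0) + (T_W ^ n) (d U0) := by
    rw [← intertwined_iterate T_W Bp Lp hBp]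
    simp only [map_add]
    abel
  rw [hsplit]
  calc _ ≤ a * ‖vm‖ * (n : ℝ) ^ (j + 1) + b * ‖v0‖ * (n : ℝ) ^ (j + 1)
        + c * ‖U0‖ * (n : ℝ) ^ (j + 1) :=
        norm_add_le_of_le (norm_add_le_of_le hm h0) hU
    _ = (a * ‖vm‖ + b * ‖v0‖ + c * ‖U0‖) * (n : ℝ) ^ (j + 1) := by ring
    _ ≤ ((a + b + c + 1) * ‖vm‖ + (a + b + c + 1) * ‖v0‖ + (a + b + c + 1) * ‖U0‖)
        * (n : ℝ) ^ (j + 1) := by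
        gcongr <;> linarith
    _ = (a + b + c + 1) * (‖vm‖ + ‖v0‖ + ‖U0‖) * (n : ℝ) ^ (j + 1) := by ring
end

section
/- Let W be a complex Banach space, V a finite-dimensional complex normed vector space, B : V → W a continuous linear map, and L a linear automorphism of V such that there exist constants C > 0 and ρ > 1 with ‖L⁻ᵏ v‖ ≤ C ρ⁻ᵏ ‖v‖ for all k ∈ ℕ, v ∈ V. Let C₀ > 0, M > 0, m̄ ∈ ℕ and p ≥ 1. Suppose γ ∈ W can be written γ = γ₀ + ∑_{ℓ=1}^{n} ∑_{i=1}^{m(ℓ)} γ_{ℓ,i} where ‖γ₀‖ ≤ C₀, m(ℓ) ≤ m̄ for all ℓ, and for each pair (ℓ,i) there is a vector c_{ℓ,i} ∈ V with ‖c_{ℓ,i}‖ ≤ M and ‖γ_{ℓ,i} − B(Lˡ c_{ℓ,i})‖ ≤ C₀ ℓ^p. Then for every integer N ≥ n ≥ 1, the vector 𝒞 := ∑_{ℓ=1}^{n} ∑_{i=1}^{m(ℓ)} L^{−(N−ℓ)} c_{ℓ,i} satisfies ‖𝒞‖ ≤ C m̄ M ρ (ρ − 1)⁻¹ and ‖γ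 − B(L^N 𝒞)‖ ≤ C₀ (1 + m̄ n^{p+1}). -/
/-!
Since `L ^ N * Linv ^ (N - ℓ) = L ^ ℓ`, applying `B ∘ L ^ N` to `𝒞` gives exactly
`∑ B (L ^ ℓ c_{ℓ,i})`, so the error `γ - B (L ^ N 𝒞)` is `γ₀` plus the sum of the per-piece errors.
There are at most `mbar` of these at each of the `n` scales, each at most `C₀ ℓ ^ p ≤ C₀ n ^ p`.
The bound on `𝒞` comes from the decay of `Linv ^ (N - ℓ)`: the exponents `N - ℓ` are distinct, so
the sum over scales is dominated by the geometric series `∑ ρ⁻¹ ^ k = ρ (ρ - 1)⁻¹`.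
-/

/-- The scales contribute distinct exponents `N - ℓ`, so the sum is part of a geometric series. -/
lemma sum_inv_pow_sub_le (ρ : ℝ) (hρ : 1 < ρ) (n N : ℕ) (hnN : n ≤ N) :
    ∑ ℓ ∈ Finset.Icc 1 n, ρ⁻¹ ^ (N - ℓ) ≤ ρ * (ρ - 1)⁻¹ := by
  have h0 : 0 ≤ ρ⁻¹ := by positivity
  have h1 : ρ⁻¹ < 1 := inv_lt_one_of_one_lt₀ hρ
  have hinj : Set.InjOn (fun ℓ => N - ℓ) (Finset.Icc 1 n : Finset ℕ) := by
    intro a ha b hb hab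
    simp only [Finset.coe_Icc, Set.mem_Icc] at ha hb hab
    omega
  calc ∑ ℓ ∈ Finset.Icc 1 n, ρ⁻¹ ^ (N - ℓ)
      = ∑ k ∈ (Finset.Icc 1 n).image (fun ℓ => N - ℓ), ρ⁻¹ ^ k :=
        (Finset.sum_image (f := fun k => ρ⁻¹ ^ k) hinj).symm
    _ ≤ ∑' k : ℕ, ρ⁻¹ ^ k :=
        (summable_geometric_of_lt_one h0 h1).sum_le_tsum _ fun k _ => by positivity
    _ = ρ * (ρ - 1)⁻¹ := by
        rw [tsum_geometric_of_lt_one h0 h1]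
        have : ρ - 1 ≠ 0 := by linarith
        have : 1 - ρ⁻¹ ≠ 0 := by linarith
        field_simp

lemma norm_sum_pieces_le {E : Type*} [SeminormedAddCommGroup E] (k K : ℕ) (hk : k ≤ K)
    (f : ℕ → E) (b : ℝ) (hb : 0 ≤ b) (hf : ∀ i ∈ Finset.Icc 1 k, ‖f i‖ ≤ b) :
    ‖∑ i ∈ Finset.Icc 1 k, f i‖ ≤ K * b := by
  calc ‖∑ i ∈ Finset.Icc 1 k, f i‖ ≤ ∑ i ∈ Finset.Icc 1 k, b := norm_sum_le_of_le _ hf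
    _ = k * b := by simp
    _ ≤ K * b := by gcongr

lemma pow_apply_inv_pow_sub {V : Type*} [NormedAddCommGroup V] [NormedSpace ℂ V]
    (L Linv : V →L[ℂ] V) (hinv : L.comp Linv = ContinuousLinearMap.id ℂ V)
    (ℓ N : ℕ) (h : ℓ ≤ N) (v : V) : (L ^ N) ((Linv ^ (N - ℓ)) v) = (L ^ ℓ) v := by
  have hk : ∀ k : ℕ, L ^ k * Linv ^ k = 1 := fun k => pow_mul_pow_eq_one k hinv
  have : L ^ N * Linv ^ (N - ℓ) = L ^ ℓ := by
    conv_lhs => rw [show N = ℓ + (N - ℓ) by omega, pow_add, Nat.add_sub_cancel_left, mul_assoc, hk,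
      mul_one]
  rw [← this]
  rfl


/-- Abstract form of Theorem 3.2 of the paper. If `γ = γ₀ + ∑_{ℓ,i} γ_{ℓ,i}` with
`‖γ₀‖ ≤ C₀`, at most `m̄` pieces per scale, and per-piece estimates
`‖γ_{ℓ,i} - B(Lˡ c_{ℓ,i})‖ ≤ C₀ ℓ^p` with `‖c_{ℓ,i}‖ ≤ M`, then for `N ≥ n ≥ 1` the vector
`𝒞 = ∑_{ℓ,i} L^{-(N-ℓ)} c_{ℓ,i}` satisfies `‖𝒞‖ ≤ C m̄ M ρ (ρ-1)⁻¹` and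
`‖γ - B(L^N 𝒞)‖ ≤ C₀ (1 + m̄ n^{p+1})`. -/
theorem stmt_9
    {W : Type*} [NormedAddCommGroup W] [NormedSpace ℂ W] [CompleteSpace W]
    {V : Type*} [NormedAddCommGroup V] [NormedSpace ℂ V] [FiniteDimensional ℂ V]
    (B : V →L[ℂ] W)
    (L Linv : V →L[ℂ] V)
    (hinv₁ : L.comp Linv = ContinuousLinearMap.id ℂ V)
    (hinv₂ : Linv.comp L = ContinuousLinearMap.id ℂ V)
    (C ρ : ℝ) (hC : 0 < C) (hρ : 1 < ρ)
    (hdecay : ∀ (k : ℕ) (v : V), ‖(Linv ^ k) v‖ ≤ C * ρ⁻¹ ^ k * ‖v‖)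
    (C₀ M : ℝ) (hC₀ : 0 < C₀) (hM : 0 < M) (mbar : ℕ) (p : ℝ) (hp : 1 ≤ p)
    (γ γ₀ : W) (n N : ℕ) (hn : 1 ≤ n) (hnN : n ≤ N)
    (m : ℕ → ℕ) (piece : ℕ → ℕ → W) (c : ℕ → ℕ → V)
    (hγ : γ = γ₀ + ∑ ℓ ∈ Finset.Icc 1 n, ∑ i ∈ Finset.Icc 1 (m ℓ), piece ℓ i)
    (hγ₀ : ‖γ₀‖ ≤ C₀)
    (hm : ∀ ℓ ∈ Finset.Icc 1 n, m ℓ ≤ mbar)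
    (hc : ∀ ℓ ∈ Finset.Icc 1 n, ∀ i ∈ Finset.Icc 1 (m ℓ), ‖c ℓ i‖ ≤ M)
    (hpiece : ∀ ℓ ∈ Finset.Icc 1 n, ∀ i ∈ Finset.Icc 1 (m ℓ),
      ‖piece ℓ i - B ((L ^ ℓ) (c ℓ i))‖ ≤ C₀ * (ℓ : ℝ) ^ p) :
    ‖∑ ℓ ∈ Finset.Icc 1 n, ∑ i ∈ Finset.Icc 1 (m ℓ), (Linv ^ (N - ℓ)) (c ℓ i)‖
        ≤ C * mbar * M * ρ * (ρ - 1)⁻¹ ∧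
    ‖γ - B ((L ^ N)
        (∑ ℓ ∈ Finset.Icc 1 n, ∑ i ∈ Finset.Icc 1 (m ℓ), (Linv ^ (N - ℓ)) (c ℓ i)))‖
      ≤ C₀ * (1 + mbar * (n : ℝ) ^ (p + 1)) := by
  have hρ0 : 0 < ρ := by linarith
  constructor
  · calc ‖∑ ℓ ∈ Finset.Icc 1 n, ∑ i ∈ Finset.Icc 1 (m ℓ), (Linv ^ (N - ℓ)) (c ℓ i)‖
        ≤ ∑ ℓ ∈ Finset.Icc 1 n, mbar * (C * ρ⁻¹ ^ (N - ℓ) * M) := by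
          refine norm_sum_le_of_le _ fun ℓ hℓ => ?_
          refine norm_sum_pieces_le _ _ (hm ℓ hℓ) _ _ (by positivity) fun i hi => ?_
          refine (hdecay _ _).trans ?_
          gcongr
          exact hc ℓ hℓ i hi
      _ = C * mbar * M * ∑ ℓ ∈ Finset.Icc 1 n, ρ⁻¹ ^ (N - ℓ) := by
          rw [Finset.mul_sum]
          exact Finset.sum_congr rfl fun ℓ _ => by ring
      _ ≤ C * mbar * M * (ρ * (ρ - 1)⁻¹) := by
          gcongr
          exact sum_inv_pow_sub_le ρ hρ n N hnN
      _ = C * mbar * M * ρ * (ρ - 1)⁻¹ := by ring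
  · have herr : γ - B ((L ^ N)
        (∑ ℓ ∈ Finset.Icc 1 n, ∑ i ∈ Finset.Icc 1 (m ℓ), (Linv ^ (N - ℓ)) (c ℓ i)))
        = γ₀ + ∑ ℓ ∈ Finset.Icc 1 n, ∑ i ∈ Finset.Icc 1 (m ℓ),
            (piece ℓ i - B ((L ^ ℓ) (c ℓ i))) := by
      have hC : B ((L ^ N)
          (∑ ℓ ∈ Finset.Icc 1 n, ∑ i ∈ Finset.Icc 1 (m ℓ), (Linv ^ (N - ℓ)) (c ℓ i)))
          = ∑ ℓ ∈ Finset.Icc 1 n, ∑ i ∈ Finset.Icc 1 (m ℓ), B ((L ^ ℓ) (c ℓ i)) := by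
        simp only [map_sum]
        refine Finset.sum_congr rfl fun ℓ hℓ => Finset.sum_congr rfl fun i _ => ?_
        rw [pow_apply_inv_pow_sub L Linv hinv₁ ℓ N ((Finset.mem_Icc.mp hℓ).2.trans hnN)]
      rw [hC, hγ]
      simp only [Finset.sum_sub_distrib]
      abel
    have hsum : ‖∑ ℓ ∈ Finset.Icc 1 n, ∑ i ∈ Finset.Icc 1 (m ℓ),
        (piece ℓ i - B ((L ^ ℓ) (c ℓ i)))‖ ≤ n * (mbar * (C₀ * (n : ℝ) ^ p)) := by
      refine norm_sum_pieces_le n n le_rfl _ _ (by positivity) fun ℓ hℓ => ?_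
      refine norm_sum_pieces_le _ _ (hm ℓ hℓ) _ _ (by positivity) fun i hi => ?_
      refine (hpiece ℓ hℓ i hi).trans ?_
      have : (ℓ : ℝ) ≤ n := by exact_mod_cast (Finset.mem_Icc.mp hℓ).2
      gcongr
    have hn0 : (n : ℝ) ≠ 0 := by positivity
    rw [herr]
    refine (norm_add_le_of_le hγ₀ hsum).trans_eq ?_
    rw [Real.rpow_add_one hn0]
    ring
end
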